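/- For every τ = u+iv ∈ H, the function g_τ : ℝ → ℂ is odd, continuous on ℝ, differentiable on ℝ ∖ (ℤ+1/2), bounded, and Lebesgue integrable on ℝ (hence g_τ ∈ L^p(ℝ) for all 1 ≤ p ≤ ∞). -/

import Mathlib

open Complex MeasureTheory
open scoped Classical

noncomputable section

/-- `e(a) = exp(2πia)`. -/
def e (a : ℂ) : ℂ := Complex.exp (2 * (Real.pi : ℂ) * Complex.I * a)

/-- The Fourier transform `F(g)(x) = ∫ g(w) e(wx) dw`. -/
def fourierT (g : ℝ → ℂ) (x : ℝ) : ℂ := ∫ w : ℝ, g w * e ((w * x : ℝ))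

/-- The operator `E_σ(f)(x) = e(x²σ/2) ∫_0^x e(-w²σ/2) f(w) dw`. -/
def Eop (σ : ℂ) (f : ℝ → ℂ) (x : ℝ) : ℂ :=
  e ((x : ℂ)^2 * σ / 2) * ∫ w in (0:ℝ)..x, e (-(w : ℂ)^2 * σ / 2) * f w

/-- `ω_τ(x) = e(-x²τ/2) ∑_{m ∈ ℤ+1/2, m ≥ |x|} e(m²τ/2 + m/2)`. -/
def omega (τ : ℂ) (x : ℝ) : ℂ :=
  e (-(x : ℂ)^2 * τ / 2) *
    ∑' m : ℤ, if |x| ≤ (m : ℝ) + 1/2 then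
      e (((m : ℂ) + 1/2)^2 / 2 * τ + ((m : ℂ) + 1/2) / 2) else 0

/-- `η³(τ) = -i ∑_{m ∈ ℤ+1/2} m e(m²τ/2 + m/2)`. -/
def eta3 (τ : ℂ) : ℂ :=
  -Complex.I * ∑' m : ℤ, ((m : ℂ) + 1/2) * e (((m : ℂ) + 1/2)^2 / 2 * τ + ((m : ℂ) + 1/2) / 2)

/-- The complementary error function. -/
def erfc (x : ℝ) : ℝ := (2 / Real.sqrt Real.pi) * ∫ t in Set.Ioi x, Real.exp (-t^2)

/-- `g⁺_τ`. -/
def gplus (τ : ℂ) (x : ℝ) : ℂ :=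
  e (-(x : ℂ)^2 * τ / 2) * ((Real.sign x : ℂ) / (Complex.I * eta3 τ)) *
    ∑' m : ℤ, if |x| < (m : ℝ) + 1/2 then
      (((m : ℝ) + 1/2 - |x| : ℝ) : ℂ) * e (((m : ℂ) + 1/2)^2 / 2 * τ + ((m : ℂ) + 1/2) / 2)
    else 0

/-- `g*_τ`. -/
def gstar (τ : ℂ) (x : ℝ) : ℂ :=
  e (-(x : ℂ)^2 * τ / 2) * ((Real.sign x : ℂ) / 2) *
    (erfc (Real.sqrt (2 * Real.pi * τ.im) * |x|) : ℂ)

/-- `g_τ = g⁺_τ - g*_τ`. -/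
def gfun (τ : ℂ) (x : ℝ) : ℂ := gplus τ x - gstar τ x

/-- The operator `ξ_k f = 2i v^k conj(∂f/∂τ̄)`, with `∂/∂τ̄ = (1/2)(∂/∂u + i ∂/∂v)`. -/
def xi (k : ℝ) (f : ℂ → ℂ) (τ : ℂ) : ℂ :=
  2 * Complex.I * ((τ.im ^ k : ℝ) : ℂ) *
    (starRingEnd ℂ) ((1/2 : ℂ) * (fderiv ℝ f τ 1 + Complex.I * fderiv ℝ f τ Complex.I))

/-- Sum of divisors function `σ₁`. -/
def sigma1 (n : ℕ) : ℕ := ∑ d ∈ Nat.divisors n, d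

/-- The weight 2 Eisenstein series `E₂`. -/
def E2 (τ : ℂ) : ℂ := 1 - 24 * ∑' n : ℕ, (sigma1 (n+1) : ℂ) * e ((n + 1 : ℂ) * τ)

/-- `ϑ̃_{N,h}`. -/
def tvtheta (N : ℕ) (h : ℝ) (τ : ℂ) : ℂ :=
  (if ∃ m : ℤ, h = (m : ℝ) + 1/2 then
      e ((h : ℂ) / 2) * E2 τ / (12 * (N : ℂ) * Complex.I * eta3 τ) else 0)
  + ∑' n : ℤ, gfun τ ((N : ℝ) * n + h)

/-- The Schwartz function `φ_τ(x,y) = √(2v)·x·e(x²τ/2 - y²τ̄/2)`. -/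
def Phi (τ : ℂ) (x y : ℝ) : ℂ :=
  (Real.sqrt (2 * τ.im) : ℂ) * (x : ℂ) *
    e ((x : ℂ)^2 * τ / 2 - (y : ℂ)^2 * (starRingEnd ℂ) τ / 2)

/-- The signature (1,1) bilinear form `B((a₁,a₂),(b₁,b₂)) = a₁b₂ + a₂b₁`. -/
def Bform (a b : ℝ × ℝ) : ℝ := a.1 * b.2 + a.2 * b.1

/-- `Z⁺_t = (t/√2, t⁻¹/√2)`. -/
def Zp (t : ℝ) : ℝ × ℝ := (t / Real.sqrt 2, t⁻¹ / Real.sqrt 2)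

/-- `Z⁻_t = (t/√2, -t⁻¹/√2)`. -/
def Zm (t : ℝ) : ℝ × ℝ := (t / Real.sqrt 2, -t⁻¹ / Real.sqrt 2)

end

/-!
The series defining `η³` is `η(τ)³` by Jacobi's identity, hence nonzero. To prove the identity,
weight the `m`-th term of the theta series by a `q`-binomial coefficient with upper index `2n + 1`.
The Pascal recurrence expresses level `n + 1` through level `n` and its neighbours `m ± 1`; since
`m ↦ 2m + 1` is discretely harmonic, pairing with it turns this into a recurrence for a scalar, and
`n → ∞` gives the infinite product.

Write `T(y) = ∑_{M > y} (M - y) e(M²τ/2 + M/2)` over `M ∈ ℤ + 1/2`. The coefficients are odd in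
`M`, so `T(y) + T(-y) = i η³(τ)`, just as `erfc(y) + erfc(-y) = 2`. These two reflections remove
`sgn` and `|·|` from the definition of `g_τ`:
`g_τ(x) = e(-x²τ/2) (T(x) / (i η³(τ)) - erfc(√(2πv) x) / 2)` for all real `x`. As `T` is Lipschitz,
and affine between consecutive points of `ℤ + 1/2`, continuity and differentiability follow.

For the growth of `g⁺_τ`, the `M`-th term has modulus `(M - |x|)⁺ exp(-πv (M - |x|)(M + |x|))`.
Re-indexing the sum by `j = M - 1/2 - ⌈|x| - 1/2⌉` bounds it by `∑ (|j| + 1) exp(-πv j²)`, uniformly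
in `x`. Estimating `M + |x| ≥ M` instead, the integral of the `M`-th term is `O(1 / M²)`, so the
series can be integrated termwise.
-/

open Filter Set
open scoped Real Topology

section FiniteJacobi

variable {K : Type*} [Field K] {q : K}

/-- The finite `q`-Pochhammer symbol `(q; q)ₙ = (1 - q)(1 - q²)⋯(1 - qⁿ)`. -/
def qPochhammer (q : K) (n : ℕ) : K := ∏ k ∈ Finset.range n, (1 - q ^ (k + 1))

/-- The reciprocal `1 / (q; q)ₖ` of the `q`-Pochhammer symbol, extended by zero to negative `k` as
is customary for `1 / k!`, so that sums of `q`-binomial coefficients run over all of `ℤ`. -/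
def qPochhammerInv (q : K) (k : ℤ) : K := if 0 ≤ k then (qPochhammer q k.toNat)⁻¹ else 0

/-- The `m`-th term of the finite form of the theta series `∑ t m`: the coefficient `t m` is
multiplied by a `q`-binomial coefficient with upper index `2n + 1`, up to normalization. -/
def finiteThetaTerm (q : K) (t : ℤ → K) (n : ℕ) (m : ℤ) : K :=
  t m * (qPochhammerInv q (n + 1 + m) * qPochhammerInv q (n - m))

lemma qPochhammer_succ (q : K) (n : ℕ) :
    qPochhammer q (n + 1) = qPochhammer q n * (1 - q ^ (n + 1)) :=
  Finset.prod_range_succ _ _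

lemma qPochhammer_ne_zero (hq : ∀ n : ℕ, 1 - q ^ (n + 1) ≠ 0) (n : ℕ) : qPochhammer q n ≠ 0 :=
  Finset.prod_ne_zero_iff.mpr fun k _ ↦ hq k

lemma qPochhammerInv_natCast (q : K) (n : ℕ) : qPochhammerInv q n = (qPochhammer q n)⁻¹ := by
  simp [qPochhammerInv]

lemma qPochhammerInv_of_neg (q : K) {k : ℤ} (hk : k < 0) : qPochhammerInv q k = 0 :=
  if_neg hk.not_ge

lemma qPochhammerInv_sub_one (hq : ∀ n : ℕ, 1 - q ^ (n + 1) ≠ 0) (k : ℤ) :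
    qPochhammerInv q (k - 1) = (1 - q ^ k) * qPochhammerInv q k := by
  rcases lt_trichotomy k 0 with hk | rfl | hk
  · rw [qPochhammerInv_of_neg q hk, qPochhammerInv_of_neg q (by lia), mul_zero]
  · rw [qPochhammerInv_of_neg q (by lia), zpow_zero, sub_self, zero_mul]
  · obtain ⟨n, rfl⟩ : ∃ n : ℕ, k = (n + 1 : ℕ) := ⟨(k - 1).toNat, by lia⟩
    have hn := qPochhammer_ne_zero hq n
    have hn' := hq n
    rw [show ((n + 1 : ℕ) : ℤ) - 1 = n by lia, qPochhammerInv_natCast, qPochhammerInv_natCast,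
      qPochhammer_succ, zpow_natCast]
    field_simp

lemma finiteThetaTerm_eq_zero (q : K) (t : ℤ → K) {n : ℕ} {m : ℤ}
    (hm : m ∉ Finset.Icc (-(n : ℤ) - 1) n) : finiteThetaTerm q t n m = 0 := by
  rw [Finset.mem_Icc, not_and_or, not_le, not_le] at hm
  rcases hm with hm | hm
  · rw [finiteThetaTerm, qPochhammerInv_of_neg q (by lia : (n : ℤ) + 1 + m < 0), zero_mul, mul_zero]
  · rw [finiteThetaTerm, qPochhammerInv_of_neg q (by lia : (n : ℤ) - m < 0), mul_zero, mul_zero]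

lemma hasFiniteSupport_finiteThetaTerm (q : K) (t : ℤ → K) (n : ℕ) :
    (finiteThetaTerm q t n).HasFiniteSupport :=
  (Finset.Icc (-(n : ℤ) - 1) n).finite_toSet.subset fun m hm ↦ by
    contrapose! hm
    simp [finiteThetaTerm_eq_zero q t hm]

variable {t : ℤ → K}

lemma finiteThetaTerm_succ (hq : ∀ n : ℕ, 1 - q ^ (n + 1) ≠ 0) (hq₀ : q ≠ 0)
    (ht : ∀ m, t (m + 1) = -q ^ (m + 1) * t m) (n : ℕ) (m : ℤ) :
    (1 - q ^ (2 * n + 2)) * (1 - q ^ (2 * n + 3)) * finiteThetaTerm q t (n + 1) m =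
      (1 + q ^ (2 * n + 2)) * finiteThetaTerm q t n m -
        q ^ (n + 1) * (finiteThetaTerm q t n (m + 1) + finiteThetaTerm q t n (m - 1)) := by
  have hp (k l : ℤ) (h : k = l - 1) :
      qPochhammerInv q k = (1 - q ^ l) * qPochhammerInv q l := h ▸ qPochhammerInv_sub_one hq l
  have ht' : t (m - 1) = -(q ^ m)⁻¹ * t m := by
    have h := ht (m - 1)
    rw [sub_add_cancel] at h
    have := zpow_ne_zero m hq₀
    rw [h]
    field_simp
  simp only [finiteThetaTerm, ht, ht']
  rw [hp (n + 1 + m) (n + 2 + m) (by ring), hp (n - m) (n + 1 - m) (by ring),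
    hp (n + 1 + (m - 1)) (n + 1 + m) (by ring), hp (n + 1 + m) (n + 2 + m) (by ring),
    hp (n - (m + 1)) (n - m) (by ring), hp (n - m) (n + 1 - m) (by ring),
    show (n : ℤ) + 1 + (m + 1) = n + 2 + m by ring, show (n : ℤ) - (m - 1) = n + 1 - m by ring,
    show ((n + 1 : ℕ) : ℤ) + 1 + m = n + 2 + m by push_cast; ring,
    show ((n + 1 : ℕ) : ℤ) - m = n + 1 - m by push_cast; ring]
  simp only [zpow_add₀ hq₀, zpow_sub₀ hq₀, zpow_natCast, zpow_ofNat]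
  have := zpow_ne_zero m hq₀
  field_simp
  ring

lemma finsum_odd_mul_add_neighbours {a : ℤ → K} (ha : a.HasFiniteSupport) :
    ∑ᶠ m : ℤ, (2 * m + 1 : K) * (a (m + 1) + a (m - 1)) =
      2 * ∑ᶠ m : ℤ, (2 * m + 1 : K) * a m := by
  have hfin (c : ℤ) : (fun m : ℤ ↦ (2 * m + 1 : K) * a (m + c)).HasFiniteSupport :=
    (ha.fun_comp_of_injective (add_left_injective c)).fun_mul_right _
  have hshift (c : ℤ) : ∑ᶠ m : ℤ, (2 * m + 1 : K) * a (m + c) =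
      ∑ᶠ m : ℤ, (2 * (m - c : ℤ) + 1 : K) * a m := by
    rw [← finsum_comp_equiv (Equiv.addRight c) (f := fun m ↦ (2 * (m - c : ℤ) + 1 : K) * a m)]
    simp
  simp_rw [mul_add (2 * _ + 1 : K), sub_eq_add_neg]
  rw [finsum_add_distrib (hfin 1) (hfin (-1)), hshift, hshift,
    ← finsum_add_distrib (ha.fun_mul_right _) (ha.fun_mul_right _), mul_finsum]
  refine finsum_congr fun m ↦ ?_
  push_cast
  ring

lemma finsum_finiteThetaTerm_succ (hq : ∀ n : ℕ, 1 - q ^ (n + 1) ≠ 0) (hq₀ : q ≠ 0)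
    (ht : ∀ m, t (m + 1) = -q ^ (m + 1) * t m) (n : ℕ) :
    (1 - q ^ (2 * n + 2)) * (1 - q ^ (2 * n + 3)) *
        ∑ᶠ m : ℤ, (2 * m + 1 : K) * finiteThetaTerm q t (n + 1) m =
      (1 - q ^ (n + 1)) ^ 2 * ∑ᶠ m : ℤ, (2 * m + 1 : K) * finiteThetaTerm q t n m := by
  set a := finiteThetaTerm q t n
  have ha : a.HasFiniteSupport := hasFiniteSupport_finiteThetaTerm q t n
  have ha' : (fun m ↦ a (m + 1) + a (m - 1)).HasFiniteSupport :=
    (ha.fun_comp_of_injective (add_left_injective 1)).add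
      (ha.fun_comp_of_injective (sub_left_injective (b := 1)))
  calc (1 - q ^ (2 * n + 2)) * (1 - q ^ (2 * n + 3)) *
        ∑ᶠ m : ℤ, (2 * m + 1 : K) * finiteThetaTerm q t (n + 1) m
    _ = ∑ᶠ m : ℤ, ((1 + q ^ (2 * n + 2)) * ((2 * m + 1) * a m) -
          q ^ (n + 1) * ((2 * m + 1) * (a (m + 1) + a (m - 1)))) := by
      rw [mul_finsum]
      refine finsum_congr fun m ↦ ?_
      rw [mul_left_comm, finiteThetaTerm_succ hq hq₀ ht]
      ring
    _ = (1 + q ^ (2 * n + 2)) * ∑ᶠ m : ℤ, (2 * m + 1 : K) * a m -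
          q ^ (n + 1) * (2 * ∑ᶠ m : ℤ, (2 * m + 1 : K) * a m) := by
      rw [finsum_sub_distrib ((ha.fun_mul_right _).fun_mul_right _)
          ((ha'.fun_mul_right _).fun_mul_right _),
        ← mul_finsum, ← mul_finsum, finsum_odd_mul_add_neighbours ha]
    _ = (1 - q ^ (n + 1)) ^ 2 * ∑ᶠ m : ℤ, (2 * m + 1 : K) * a m := by ring

lemma finsum_finiteThetaTerm (hq : ∀ n : ℕ, 1 - q ^ (n + 1) ≠ 0) (hq₀ : q ≠ 0)
    (ht : ∀ m, t (m + 1) = -q ^ (m + 1) * t m) (n : ℕ) :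
    ∑ᶠ m : ℤ, (2 * m + 1 : K) * finiteThetaTerm q t n m =
      2 * t 0 * (qPochhammer q n ^ 2 / qPochhammer q (2 * n + 1)) := by
  induction n with
  | zero =>
    have hsupp : (fun m : ℤ ↦ (2 * m + 1 : K) * finiteThetaTerm q t 0 m).support ⊆
        (({-1, 0} : Finset ℤ) : Set ℤ) := fun m hm ↦ by
      contrapose! hm
      have : m ∉ Finset.Icc (-((0 : ℕ) : ℤ) - 1) 0 := by
        simp only [Finset.coe_insert, Finset.coe_singleton, Set.mem_insert_iff,
          Set.mem_singleton_iff, Finset.mem_Icc] at hm ⊢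
        lia
      simp [finiteThetaTerm_eq_zero q t this]
    have ht₀ : t 0 = -t (-1) := by simpa using ht (-1)
    rw [finsum_eq_sum_of_support_subset _ hsupp, Finset.sum_pair (by decide)]
    have hInv₀ : qPochhammerInv q 0 = 1 := by simp [qPochhammerInv, qPochhammer]
    have hInv₁ : qPochhammerInv q 1 = (1 - q)⁻¹ := by simp [qPochhammerInv, qPochhammer]
    have hP₀ : qPochhammer q 0 = 1 := by simp [qPochhammer]
    have hP₁ : qPochhammer q (2 * 0 + 1) = 1 - q := by simp [qPochhammer]
    simp only [finiteThetaTerm, Nat.cast_zero, zero_add, add_neg_cancel, sub_neg_eq_add, add_zero,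
      sub_zero, hInv₀, hInv₁, hP₀, hP₁, ht₀]
    push_cast
    ring
  | succ n ih =>
    have h := finsum_finiteThetaTerm_succ hq hq₀ ht n
    rw [ih] at h
    have h₁ := hq (2 * n + 1)
    have h₂ := hq (2 * n + 2)
    have h₃ := qPochhammer_ne_zero hq (2 * n + 1)
    rw [show 2 * (n + 1) + 1 = 2 * n + 1 + 1 + 1 by ring, qPochhammer_succ, qPochhammer_succ,
      qPochhammer_succ]
    refine mul_left_cancel₀ (mul_ne_zero h₁ h₂) (h.trans ?_)
    field_simp

end FiniteJacobi

section JacobiIdentity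

variable {q : ℂ}

lemma one_sub_pow_succ_ne_zero (hq : ‖q‖ < 1) (n : ℕ) : 1 - q ^ (n + 1) ≠ 0 := by
  refine sub_ne_zero.mpr fun h ↦ ?_
  have := pow_lt_one₀ (norm_nonneg q) hq n.succ_ne_zero
  rw [← norm_pow, ← h, norm_one] at this
  exact lt_irrefl 1 this

lemma tendsto_qPochhammer (hq : ‖q‖ < 1) :
    Tendsto (qPochhammer q) atTop (𝓝 (∏' n : ℕ, (1 - q ^ (n + 1)))) :=
  (ModularForm.multipliable_one_sub_pow hq).hasProd.tendsto_prod_nat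

lemma tprod_one_sub_pow_ne_zero (hq : ‖q‖ < 1) : ∏' n : ℕ, (1 - q ^ (n + 1)) ≠ 0 := by
  simp_rw [sub_eq_add_neg]
  refine tprod_one_add_ne_zero_of_summable (f := fun n : ℕ ↦ -q ^ (n + 1)) (fun n ↦ ?_) ?_
  · simpa only [sub_eq_add_neg] using one_sub_pow_succ_ne_zero hq n
  · simpa using (summable_nat_add_iff 1).mpr (summable_geometric_of_lt_one (norm_nonneg q) hq)

lemma tendsto_inv_qPochhammer (hq : ‖q‖ < 1) :
    Tendsto (fun n ↦ (qPochhammer q n)⁻¹) atTop (𝓝 (∏' n : ℕ, (1 - q ^ (n + 1)))⁻¹) :=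
  (tendsto_qPochhammer hq).inv₀ (tprod_one_sub_pow_ne_zero hq)

lemma tendsto_qPochhammerInv (hq : ‖q‖ < 1) :
    Tendsto (qPochhammerInv q) atTop (𝓝 (∏' n : ℕ, (1 - q ^ (n + 1)))⁻¹) := by
  have htoNat : Tendsto Int.toNat atTop atTop :=
    tendsto_atTop_atTop.mpr fun b ↦ ⟨b, fun k hk ↦ by lia⟩
  refine ((tendsto_inv_qPochhammer hq).comp htoNat).congr' ?_
  filter_upwards [eventually_ge_atTop 0] with k hk
  simp [qPochhammerInv, hk]

lemma exists_norm_qPochhammerInv_le (hq : ‖q‖ < 1) : ∃ B, ∀ k, ‖qPochhammerInv q k‖ ≤ B := by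
  obtain ⟨B, hB⟩ :=
    (Metric.isBounded_range_of_tendsto _ (tendsto_inv_qPochhammer hq)).exists_norm_le
  refine ⟨B, fun k ↦ ?_⟩
  rw [qPochhammerInv]
  split_ifs
  · exact hB _ ⟨_, rfl⟩
  · exact norm_zero.trans_le ((norm_nonneg _).trans (hB _ ⟨0, rfl⟩))

variable {t : ℤ → ℂ}

lemma tendsto_tsum_mul_finiteThetaTerm (hq : ‖q‖ < 1) {w : ℤ → ℂ}
    (hsum : Summable fun m ↦ w m * t m) :
    Tendsto (fun n ↦ ∑' m, w m * finiteThetaTerm q t n m) atTop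
      (𝓝 ((∑' m, w m * t m) * ((∏' n : ℕ, (1 - q ^ (n + 1)))⁻¹) ^ 2)) := by
  obtain ⟨B, hB⟩ := exists_norm_qPochhammerInv_le hq
  have hB₀ : 0 ≤ B := (norm_nonneg _).trans (hB 0)
  have hadd (m : ℤ) : Tendsto (fun n : ℕ ↦ (n : ℤ) + 1 + m) atTop atTop :=
    tendsto_atTop_add_const_right _ _
      (tendsto_atTop_add_const_right _ _ tendsto_natCast_atTop_atTop)
  have hsub (m : ℤ) : Tendsto (fun n : ℕ ↦ (n : ℤ) - m) atTop atTop :=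
    tendsto_atTop_add_const_right _ (-m) tendsto_natCast_atTop_atTop
  rw [← tsum_mul_right]
  simp_rw [finiteThetaTerm, ← mul_assoc (w _)]
  refine tendsto_tsum_of_dominated_convergence (hsum.norm.mul_right (B * B)) (fun m ↦ ?_)
    (.of_forall fun n m ↦ ?_)
  · rw [sq]
    exact (((tendsto_qPochhammerInv hq).comp (hadd m)).mul
      ((tendsto_qPochhammerInv hq).comp (hsub m))).const_mul _
  · rw [norm_mul, norm_mul (qPochhammerInv _ _)]
    gcongr <;> exact hB _

lemma tsum_odd_mul_eq_tprod (hq : ‖q‖ < 1) (hq₀ : q ≠ 0)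
    (ht : ∀ m, t (m + 1) = -q ^ (m + 1) * t m)
    (hsum : Summable fun m : ℤ ↦ (2 * m + 1 : ℂ) * t m) :
    ∑' m : ℤ, (2 * m + 1 : ℂ) * t m = 2 * t 0 * (∏' n : ℕ, (1 - q ^ (n + 1))) ^ 3 := by
  set P := ∏' n : ℕ, (1 - q ^ (n + 1))
  have hP : P ≠ 0 := tprod_one_sub_pow_ne_zero hq
  have hfinite (n : ℕ) : ∑' m : ℤ, (2 * m + 1 : ℂ) * finiteThetaTerm q t n m =
      2 * t 0 * (qPochhammer q n ^ 2 / qPochhammer q (2 * n + 1)) := by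
    rw [tsum_eq_finsum ((hasFiniteSupport_finiteThetaTerm q t n).fun_mul_right _),
      finsum_finiteThetaTerm (one_sub_pow_succ_ne_zero hq) hq₀ ht]
  have hodd : Tendsto (fun n : ℕ ↦ 2 * n + 1) atTop atTop :=
    tendsto_atTop_atTop.mpr fun b ↦ ⟨b, fun n hn ↦ by lia⟩
  have hlim : Tendsto (fun n : ℕ ↦ 2 * t 0 * (qPochhammer q n ^ 2 / qPochhammer q (2 * n + 1)))
      atTop (𝓝 (2 * t 0 * (P ^ 2 / P))) :=
    (((tendsto_qPochhammer hq).pow 2).div ((tendsto_qPochhammer hq).comp hodd) hP).const_mul _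
  have h : (∑' m : ℤ, (2 * m + 1 : ℂ) * t m) * P⁻¹ ^ 2 = 2 * t 0 * (P ^ 2 / P) :=
    tendsto_nhds_unique (tendsto_tsum_mul_finiteThetaTerm hq hsum)
      (hlim.congr fun n ↦ (hfinite n).symm)
  field_simp at h
  linear_combination h

end JacobiIdentity

section ThetaCoeff

lemma e_add (a b : ℂ) : e (a + b) = e a * e b := by
  rw [e, e, e, mul_add, Complex.exp_add]

lemma e_ne_zero (a : ℂ) : e a ≠ 0 := Complex.exp_ne_zero _

lemma e_intCast_mul (n : ℤ) (a : ℂ) : e (n * a) = e a ^ n := by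
  rw [e, e, ← Complex.exp_int_mul]
  ring_nf

lemma e_intCast (n : ℤ) : e n = 1 := by
  rw [e, mul_comm, Complex.exp_int_mul_two_pi_mul_I]

lemma e_half : e (1 / 2) = -1 := by
  rw [e, ← Complex.exp_pi_mul_I]
  ring_nf

lemma e_quarter : e (1 / 4) = I := by
  conv_rhs => rw [← Complex.exp_pi_div_two_mul_I]
  rw [e]
  ring_nf

lemma norm_e (a : ℂ) : ‖e a‖ = Real.exp (-(2 * π * a.im)) := by
  simp [e, Complex.norm_exp]

lemma norm_e_lt_one {τ : ℂ} (hτ : 0 < τ.im) : ‖e τ‖ < 1 := by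
  rw [norm_e, Real.exp_lt_one_iff, neg_lt_zero]
  positivity

/-- The coefficient `e(M²τ/2 + M/2)` of the theta series, where `M = m + 1/2`. -/
noncomputable def thetaCoeff (τ : ℂ) (m : ℤ) : ℂ :=
  e (((m : ℂ) + 1 / 2) ^ 2 / 2 * τ + ((m : ℂ) + 1 / 2) / 2)

lemma thetaCoeff_add_one (τ : ℂ) (m : ℤ) :
    thetaCoeff τ (m + 1) = -e τ ^ (m + 1) * thetaCoeff τ m := by
  rw [thetaCoeff, thetaCoeff, ← e_intCast_mul, ← neg_one_mul, ← e_half, ← e_add, ← e_add]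
  congr 1
  push_cast
  ring

lemma thetaCoeff_neg_one_sub (τ : ℂ) (m : ℤ) : thetaCoeff τ (-1 - m) = -thetaCoeff τ m := by
  have h : (((-1 - m : ℤ) : ℂ) + 1 / 2) ^ 2 / 2 * τ + (((-1 - m : ℤ) : ℂ) + 1 / 2) / 2 =
      ((-1 - m : ℤ) : ℂ) + (1 / 2 + (((m : ℂ) + 1 / 2) ^ 2 / 2 * τ + ((m : ℂ) + 1 / 2) / 2)) := by
    push_cast
    ring
  rw [thetaCoeff, h, e_add, e_add, e_intCast, e_half, one_mul, neg_one_mul, thetaCoeff]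

lemma thetaCoeff_zero (τ : ℂ) : thetaCoeff τ 0 = I * e (τ / 8) := by
  rw [thetaCoeff, ← e_quarter, ← e_add]
  congr 1
  push_cast
  ring

lemma norm_thetaCoeff (τ : ℂ) (m : ℤ) :
    ‖thetaCoeff τ m‖ = Real.exp (-(π * τ.im * ((m : ℝ) + 1 / 2) ^ 2)) := by
  have h : ((m : ℂ) + 1 / 2) ^ 2 / 2 * τ + ((m : ℂ) + 1 / 2) / 2 =
      ((((m : ℝ) + 1 / 2) ^ 2 / 2 : ℝ) : ℂ) * τ + ((((m : ℝ) + 1 / 2) / 2 : ℝ) : ℂ) := by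
    push_cast
    ring
  rw [thetaCoeff, h, norm_e]
  simp only [add_im, im_ofReal_mul, ofReal_im]
  ring_nf

lemma summable_abs_add_one_mul_exp_neg_sq {c : ℝ} (hc : 0 < c) :
    Summable fun m : ℤ ↦ (|(m : ℝ)| + 1) * Real.exp (-(c * m ^ 2)) := by
  have h (k : ℕ) : Summable fun m : ℤ ↦ |(m : ℝ)| ^ k * Real.exp (-(c * m ^ 2)) := by
    refine (summable_pow_mul_jacobiTheta₂_term_bound 0 (div_pos hc Real.pi_pos) k).congr fun m ↦ ?_
    have := Real.pi_ne_zero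
    push_cast
    congr 2
    field_simp
    ring
  simpa only [pow_one, pow_zero, add_mul] using (h 1).add (h 0)

variable {τ : ℂ}

lemma summable_mul_thetaCoeff (hτ : 0 < τ.im) {w : ℤ → ℂ} {C : ℝ}
    (hw : ∀ m, ‖w m‖ ≤ C * (|(m : ℝ)| + 1)) : Summable fun m ↦ w m * thetaCoeff τ m := by
  have hc : 0 < π * τ.im := mul_pos Real.pi_pos hτ
  refine .of_norm_bounded (((summable_abs_add_one_mul_exp_neg_sq (half_pos hc)).mul_left
    (C * Real.exp (π * τ.im / 4)))) fun m ↦ ?_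
  have hexp : Real.exp (-(π * τ.im * ((m : ℝ) + 1 / 2) ^ 2)) ≤
      Real.exp (π * τ.im / 4) * Real.exp (-(π * τ.im / 2 * m ^ 2)) := by
    rw [← Real.exp_add, Real.exp_le_exp]
    nlinarith [mul_nonneg hc.le (sq_nonneg ((m : ℝ) + 1))]
  rw [norm_mul, norm_thetaCoeff]
  calc ‖w m‖ * Real.exp (-(π * τ.im * ((m : ℝ) + 1 / 2) ^ 2))
    _ ≤ (C * (|(m : ℝ)| + 1)) *
        (Real.exp (π * τ.im / 4) * Real.exp (-(π * τ.im / 2 * m ^ 2))) :=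
      mul_le_mul (hw m) hexp (Real.exp_nonneg _) ((norm_nonneg _).trans (hw m))
    _ = _ := by ring

lemma summable_thetaCoeff (hτ : 0 < τ.im) : Summable (thetaCoeff τ) := by
  have h := summable_mul_thetaCoeff hτ (w := fun _ ↦ 1) (C := 1) fun m ↦ by simp
  simpa only [one_mul] using h

lemma norm_intCast_add_half_le (m : ℤ) : ‖(m : ℂ) + 1 / 2‖ ≤ |(m : ℝ)| + 1 := by
  refine (norm_add_le _ _).trans ?_
  rw [Complex.norm_intCast]
  norm_num

lemma summable_intCast_add_half_mul_thetaCoeff (hτ : 0 < τ.im) :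
    Summable fun m : ℤ ↦ ((m : ℂ) + 1 / 2) * thetaCoeff τ m :=
  summable_mul_thetaCoeff hτ (C := 1) fun m ↦ (norm_intCast_add_half_le m).trans_eq (one_mul _).symm

lemma tsum_thetaCoeff (τ : ℂ) : ∑' m, thetaCoeff τ m = 0 := by
  have h := (Equiv.subLeft (-1 : ℤ)).tsum_eq (thetaCoeff τ)
  simp only [Equiv.subLeft_apply, thetaCoeff_neg_one_sub, tsum_neg] at h
  exact neg_eq_self.mp h

lemma I_mul_eta3 (τ : ℂ) : I * eta3 τ = ∑' m : ℤ, ((m : ℂ) + 1 / 2) * thetaCoeff τ m := by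
  rw [eta3, ← mul_assoc, mul_neg, I_mul_I, neg_neg, one_mul]
  rfl

theorem eta3_eq_eta_pow_three (hτ : 0 < τ.im) : eta3 τ = ModularForm.eta τ ^ 3 := by
  have hsum := summable_intCast_add_half_mul_thetaCoeff hτ
  have hodd (m : ℤ) : (2 * m + 1 : ℂ) * thetaCoeff τ m =
      2 * (((m : ℂ) + 1 / 2) * thetaCoeff τ m) := by ring
  have hjacobi := tsum_odd_mul_eq_tprod (norm_e_lt_one hτ) (e_ne_zero τ) (thetaCoeff_add_one τ)
    ((hsum.mul_left 2).congr fun m ↦ (hodd m).symm)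
  simp_rw [hodd] at hjacobi
  rw [tsum_mul_left, ← I_mul_eta3, thetaCoeff_zero] at hjacobi
  have hq : Function.Periodic.qParam 24 τ ^ 3 = e (τ / 8) := by
    rw [Function.Periodic.qParam, e, ← Complex.exp_nat_mul]
    congr 1
    push_cast
    ring
  have heta : ModularForm.eta τ =
      Function.Periodic.qParam 24 τ * ∏' n : ℕ, (1 - e τ ^ (n + 1)) := by
    simp only [ModularForm.eta, ModularForm.eta_q_eq_pow, e]
  rw [heta, mul_pow, hq]
  refine mul_left_cancel₀ (mul_ne_zero two_ne_zero I_ne_zero) ?_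
  linear_combination hjacobi

lemma eta3_ne_zero (hτ : 0 < τ.im) : eta3 τ ≠ 0 := by
  rw [eta3_eq_eta_pow_three hτ]
  exact pow_ne_zero 3 (ModularForm.eta_ne_zero hτ)

end ThetaCoeff

section ErrorFunction

lemma integrable_exp_neg_sq : Integrable fun t : ℝ ↦ Real.exp (-t ^ 2) := by
  simpa using integrable_exp_neg_mul_sq one_pos

lemma erfc_nonneg (y : ℝ) : 0 ≤ erfc y :=
  mul_nonneg (by positivity) (integral_nonneg fun t ↦ (Real.exp_pos _).le)

lemma erfc_neg (y : ℝ) : erfc (-y) = 2 - erfc y := by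
  have hreflect : ∫ t in Iic y, Real.exp (-t ^ 2) = ∫ t in Ioi (-y), Real.exp (-t ^ 2) := by
    rw [← integral_comp_neg_Iic]
    simp only [neg_sq]
  have hgauss : ∫ t : ℝ, Real.exp (-t ^ 2) = √π := by simpa using integral_gaussian 1
  have hsplit := intervalIntegral.integral_Iic_add_Ioi (b := y)
    integrable_exp_neg_sq.integrableOn integrable_exp_neg_sq.integrableOn
  rw [hgauss, hreflect] at hsplit
  have : √π ≠ 0 := (Real.sqrt_pos.mpr Real.pi_pos).ne'
  rw [erfc, erfc, eq_sub_of_add_eq hsplit]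
  field_simp

lemma erfc_zero : erfc 0 = 1 := by
  have h := erfc_neg 0
  rw [neg_zero] at h
  linarith

lemma hasDerivAt_erfc (y : ℝ) : HasDerivAt erfc (-(2 / √π * Real.exp (-y ^ 2))) y := by
  have hsplit (y : ℝ) : erfc y = erfc 0 - 2 / √π * ∫ t in (0 : ℝ)..y, Real.exp (-t ^ 2) := by
    rw [erfc, erfc, ← intervalIntegral.integral_interval_add_Ioi (a := 0) (b := y)
      integrable_exp_neg_sq.integrableOn integrable_exp_neg_sq.integrableOn]
    ring
  rw [funext hsplit]
  exact ((intervalIntegral.integral_hasDerivAt_right integrable_exp_neg_sq.intervalIntegrable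
    integrable_exp_neg_sq.aestronglyMeasurable.stronglyMeasurableAtFilter
    (by fun_prop)).const_mul _).const_sub _

lemma erfc_le_exp_neg_sq {y : ℝ} (hy : 0 ≤ y) : erfc y ≤ Real.exp (-y ^ 2) := by
  have hshift : ∫ t in Ioi y, Real.exp (-t ^ 2) = ∫ t in Ioi 0, Real.exp (-(t + y) ^ 2) := by
    rw [← (measurePreserving_add_right volume y).setIntegral_preimage_emb
      (measurableEmbedding_addRight y)]
    simp
  have hint : IntegrableOn (fun t ↦ Real.exp (-(t + y) ^ 2)) (Ioi 0) :=
    (integrable_exp_neg_sq.comp_add_right y).integrableOn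
  calc erfc y = 2 / √π * ∫ t in Ioi 0, Real.exp (-(t + y) ^ 2) := by rw [erfc, hshift]
    _ ≤ 2 / √π * ∫ t in Ioi 0, Real.exp (-y ^ 2) * Real.exp (-t ^ 2) := by
      gcongr 2 / √π * ?_
      refine setIntegral_mono_on hint (integrable_exp_neg_sq.const_mul _).integrableOn
        measurableSet_Ioi fun t ht ↦ ?_
      rw [← Real.exp_add, Real.exp_le_exp]
      nlinarith [mul_nonneg (mem_Ioi.mp ht).le hy]
    _ = Real.exp (-y ^ 2) * erfc 0 := by rw [integral_const_mul, erfc]; ring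
    _ = Real.exp (-y ^ 2) := by rw [erfc_zero, mul_one]

end ErrorFunction

section ThetaTail

/-- The tail `∑_{M > y} (M - y) e(M²τ/2 + M/2)` over `M ∈ ℤ + 1/2` of the theta series, as in the
definition of `g⁺_τ` but for `y` of either sign; positive parts replace the restriction on `M`. -/
noncomputable def thetaTail (τ : ℂ) (y : ℝ) : ℂ :=
  ∑' m : ℤ, ((max ((m : ℝ) + 1 / 2 - y) 0 : ℝ) : ℂ) * thetaCoeff τ m

variable {τ : ℂ}

lemma gplus_eq_thetaTail (τ : ℂ) (x : ℝ) : gplus τ x =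
    e (-(x : ℂ) ^ 2 * τ / 2) * ((Real.sign x : ℂ) / (I * eta3 τ)) * thetaTail τ |x| := by
  rw [gplus, thetaTail]
  congr 1
  refine tsum_congr fun m ↦ ?_
  split_ifs with h
  · rw [max_eq_left (by linarith), thetaCoeff]
  · rw [max_eq_right (by linarith), ofReal_zero, zero_mul]

lemma summable_thetaTail (hτ : 0 < τ.im) (y : ℝ) :
    Summable fun m : ℤ ↦ ((max ((m : ℝ) + 1 / 2 - y) 0 : ℝ) : ℂ) * thetaCoeff τ m := by
  refine summable_mul_thetaCoeff hτ (C := |y| + 1) fun m ↦ ?_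
  rw [norm_real, Real.norm_of_nonneg (le_max_right _ _)]
  refine max_le ?_ (by positivity)
  nlinarith [le_abs_self (m : ℝ), neg_abs_le y, mul_nonneg (abs_nonneg y) (abs_nonneg (m : ℝ))]

lemma thetaTail_add_thetaTail_neg (hτ : 0 < τ.im) (y : ℝ) :
    thetaTail τ y + thetaTail τ (-y) = I * eta3 τ := by
  have hterm (m : ℤ) : ((max ((m : ℝ) + 1 / 2 - y) 0 : ℝ) : ℂ) * thetaCoeff τ m +
      ((max (((-1 - m : ℤ) : ℝ) + 1 / 2 - -y) 0 : ℝ) : ℂ) * thetaCoeff τ (-1 - m) =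
      ((m : ℂ) + 1 / 2) * thetaCoeff τ m - y * thetaCoeff τ m := by
    have hmax : max ((m : ℝ) + 1 / 2 - y) 0 - max (((-1 - m : ℤ) : ℝ) + 1 / 2 - -y) 0 =
        (m : ℝ) + 1 / 2 - y := by
      rw [show ((-1 - m : ℤ) : ℝ) + 1 / 2 - -y = -((m : ℝ) + 1 / 2 - y) by push_cast; ring,
        max_zero_sub_eq_self]
    rw [thetaCoeff_neg_one_sub, mul_neg, ← sub_eq_add_neg, ← sub_mul, ← sub_mul, ← ofReal_sub, hmax]
    push_cast
    rfl
  have hneg : Summable fun m : ℤ ↦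
      ((max (((-1 - m : ℤ) : ℝ) + 1 / 2 - -y) 0 : ℝ) : ℂ) * thetaCoeff τ (-1 - m) := by
    simpa only [Function.comp_def] using
      (summable_thetaTail hτ (-y)).comp_injective (sub_right_injective (b := (-1 : ℤ)))
  have hsum := summable_intCast_add_half_mul_thetaCoeff hτ
  calc thetaTail τ y + thetaTail τ (-y)
    _ = ∑' m : ℤ, (((m : ℂ) + 1 / 2) * thetaCoeff τ m - y * thetaCoeff τ m) := by
      rw [thetaTail, thetaTail, ← (Equiv.subLeft (-1 : ℤ)).tsum_eq (fun m ↦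
        ((max ((m : ℝ) + 1 / 2 - -y) 0 : ℝ) : ℂ) * thetaCoeff τ m)]
      simp only [Equiv.subLeft_apply]
      rw [← (summable_thetaTail hτ y).tsum_add hneg]
      exact tsum_congr hterm
    _ = I * eta3 τ := by
      rw [hsum.tsum_sub ((summable_thetaCoeff hτ).mul_left _), tsum_mul_left, tsum_thetaCoeff,
        mul_zero, sub_zero, I_mul_eta3]

lemma lipschitzWith_thetaTail (hτ : 0 < τ.im) :
    ∃ L, LipschitzWith L (thetaTail τ) := by
  have hsum := (summable_thetaCoeff hτ).norm
  refine ⟨(∑' m, ‖thetaCoeff τ m‖).toNNReal, .of_dist_le_mul fun y z ↦ ?_⟩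
  rw [Real.coe_toNNReal _ (tsum_nonneg fun m ↦ norm_nonneg _), dist_eq_norm, thetaTail, thetaTail,
    ← (summable_thetaTail hτ y).tsum_sub (summable_thetaTail hτ z)]
  refine tsum_of_norm_bounded (hsum.hasSum.mul_right (dist y z)) fun m ↦ ?_
  rw [← sub_mul, norm_mul, mul_comm, ← ofReal_sub, norm_real, Real.norm_eq_abs]
  gcongr
  refine (abs_max_sub_max_le_abs _ _ _).trans_eq ?_
  rw [sub_sub_sub_cancel_left, dist_comm, Real.dist_eq]

lemma thetaTail_of_mem_Icc (hτ : 0 < τ.im) {k : ℤ} {y : ℝ}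
    (hy : y ∈ Icc ((k : ℝ) - 1 / 2) (k + 1 / 2)) :
    thetaTail τ y = ∑' m : ℤ, (if k ≤ m then (m : ℂ) + 1 / 2 else 0) * thetaCoeff τ m -
      y * ∑' m : ℤ, (if k ≤ m then 1 else 0) * thetaCoeff τ m := by
  have hsum₁ : Summable fun m : ℤ ↦ (if k ≤ m then (m : ℂ) + 1 / 2 else 0) * thetaCoeff τ m := by
    refine summable_mul_thetaCoeff hτ (C := 1) fun m ↦ ?_
    split_ifs
    · exact (norm_intCast_add_half_le m).trans_eq (one_mul _).symm
    · rw [norm_zero]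
      positivity
  have hsum₀ : Summable fun m : ℤ ↦ (if k ≤ m then 1 else 0) * thetaCoeff τ m := by
    refine summable_mul_thetaCoeff hτ (C := 1) fun m ↦ ?_
    split_ifs
    · simp
    · rw [norm_zero]
      positivity
  rw [thetaTail, ← tsum_mul_left, ← hsum₁.tsum_sub (hsum₀.mul_left _)]
  refine tsum_congr fun m ↦ ?_
  split_ifs with hm
  · have : (k : ℝ) ≤ m := mod_cast hm
    rw [max_eq_left (by linarith [hy.2])]
    push_cast
    ring
  · have : (m : ℝ) + 1 ≤ k := mod_cast not_le.mp hm
    rw [max_eq_right (by linarith [hy.1])]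
    simp

lemma differentiableAt_thetaTail (hτ : 0 < τ.im) {x : ℝ} (hx : ∀ m : ℤ, x ≠ (m : ℝ) + 1 / 2) :
    DifferentiableAt ℝ (thetaTail τ) x := by
  set k := ⌊x + 1 / 2⌋
  have hlt : (k : ℝ) - 1 / 2 < x := by
    refine lt_of_le_of_ne (by linarith [Int.floor_le (x + 1 / 2)]) fun h ↦ hx (k - 1) ?_
    push_cast
    linarith
  have hgt : x < (k : ℝ) + 1 / 2 := by linarith [Int.lt_floor_add_one (x + 1 / 2)]
  have hloc := (Icc_mem_nhds hlt hgt : _ ∈ 𝓝 x)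
  refine DifferentiableAt.congr_of_eventuallyEq ?_
    (eventually_of_mem hloc fun y hy ↦ thetaTail_of_mem_Icc hτ hy)
  exact (ofRealCLM.differentiableAt.mul_const _).const_sub _

end ThetaTail

section SignFreeFormula

variable {τ : ℂ}

theorem gfun_eq (hτ : 0 < τ.im) (x : ℝ) : gfun τ x = e (-(x : ℂ) ^ 2 * τ / 2) *
    (thetaTail τ x / (I * eta3 τ) - (erfc (√(2 * π * τ.im) * x) / 2 : ℝ)) := by
  have hη : eta3 τ ≠ 0 := eta3_ne_zero hτ
  have hreflect := thetaTail_add_thetaTail_neg hτ x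
  rw [gfun, gplus_eq_thetaTail, gstar]
  rcases lt_trichotomy x 0 with hx | rfl | hx
  · rw [Real.sign_of_neg hx, abs_of_neg hx, mul_neg, erfc_neg, eq_sub_of_add_eq' hreflect]
    push_cast
    field_simp
    ring
  · rw [neg_zero, ← two_mul] at hreflect
    have hhalf : thetaTail τ 0 / (I * eta3 τ) = 1 / 2 := by
      rw [div_eq_iff (mul_ne_zero I_ne_zero hη)]
      linear_combination hreflect / 2
    simp [hhalf, erfc_zero]
  · rw [Real.sign_of_pos hx, abs_of_pos hx]
    push_cast
    ring

lemma gfun_neg (τ : ℂ) (x : ℝ) : gfun τ (-x) = -gfun τ x := by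
  simp only [gfun, gplus, gstar, abs_neg, Real.sign_neg, ofReal_neg, neg_sq]
  ring

lemma differentiable_e_neg_sq_mul (τ : ℂ) :
    Differentiable ℝ fun x : ℝ ↦ e (-(x : ℂ) ^ 2 * τ / 2) := by
  have h : Differentiable ℝ fun x : ℝ ↦ 2 * (π : ℂ) * I * (-(x : ℂ) ^ 2 * τ / 2) := by
    have : Differentiable ℝ fun x : ℝ ↦ (x : ℂ) := ofRealCLM.differentiable
    fun_prop
  exact h.cexp

lemma differentiable_erfc_const_mul (c : ℝ) :
    Differentiable ℝ fun x ↦ ((erfc (c * x) / 2 : ℝ) : ℂ) := by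
  have : Differentiable ℝ erfc := fun y ↦ (hasDerivAt_erfc y).differentiableAt
  exact ofRealCLM.differentiable.comp ((this.comp (differentiable_id.const_mul c)).div_const 2)

lemma continuous_gfun (hτ : 0 < τ.im) : Continuous (gfun τ) := by
  obtain ⟨L, hL⟩ := lipschitzWith_thetaTail hτ
  rw [funext (gfun_eq hτ)]
  exact (differentiable_e_neg_sq_mul τ).continuous.mul
    ((hL.continuous.div_const _).sub (differentiable_erfc_const_mul _).continuous)

lemma differentiableAt_gfun (hτ : 0 < τ.im) {x : ℝ} (hx : ∀ m : ℤ, x ≠ (m : ℝ) + 1 / 2) :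
    DifferentiableAt ℝ (gfun τ) x := by
  rw [funext (gfun_eq hτ)]
  exact (differentiable_e_neg_sq_mul τ x).mul
    (((differentiableAt_thetaTail hτ hx).div_const _).sub (differentiable_erfc_const_mul _ x))

end SignFreeFormula

section TermwiseIntegration

lemma hasFiniteIntegral_tsum_of_summable_integral_norm {α ι E : Type*} [MeasurableSpace α]
    {μ : Measure α} [Countable ι] [NormedAddCommGroup E] {F : ι → α → E}
    (hF_int : ∀ i, Integrable (F i) μ) (hF_sum : Summable fun i ↦ ∫ a, ‖F i a‖ ∂μ) :
    HasFiniteIntegral (fun a ↦ ∑' i, F i a) μ := by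
  calc ∫⁻ a, ‖∑' i, F i a‖ₑ ∂μ
    _ ≤ ∫⁻ a, ∑' i, ‖F i a‖ₑ ∂μ := lintegral_mono fun a ↦ enorm_tsum_le_tsum_enorm
    _ = ∑' i, ∫⁻ a, ‖F i a‖ₑ ∂μ := lintegral_tsum fun i ↦ (hF_int i).1.enorm
    _ = ∑' i, ENNReal.ofReal (∫ a, ‖F i a‖ ∂μ) :=
      tsum_congr fun i ↦ (ofReal_integral_norm_eq_lintegral_enorm (hF_int i)).symm
    _ < ⊤ := hF_sum.tsum_ofReal_lt_top

/-- The unnormalized Gamma density `r ↦ r⁺ exp(-a r)`, which dominates the terms of `g⁺_τ` after a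
translation. -/
noncomputable def gammaRamp (a r : ℝ) : ℝ := max r 0 * Real.exp (-(a * r))

lemma gammaRamp_nonneg (a r : ℝ) : 0 ≤ gammaRamp a r := by
  rw [gammaRamp]
  positivity

lemma integral_gammaRamp {a : ℝ} (ha : 0 < a) : ∫ r, gammaRamp a r = (1 / a) ^ 2 := by
  have hgamma := Real.integral_rpow_mul_exp_neg_mul_Ioi two_pos ha
  rw [show (2 : ℝ) - 1 = 1 by norm_num, Real.Gamma_two, mul_one, Real.rpow_two] at hgamma
  rw [← hgamma, ← setIntegral_eq_integral_of_forall_compl_eq_zero (s := Ioi 0) fun r hr ↦ by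
    rw [gammaRamp, max_eq_right (not_lt.mp hr), zero_mul]]
  refine setIntegral_congr_fun measurableSet_Ioi fun r hr ↦ ?_
  simp only [gammaRamp, Real.rpow_one, max_eq_left (mem_Ioi.mp hr).le]

lemma integrable_gammaRamp {a : ℝ} (ha : 0 < a) : Integrable (gammaRamp a) :=
  .of_integral_ne_zero <| by
    rw [integral_gammaRamp ha]
    positivity

end TermwiseIntegration

section Bounds

/-- The `m`-th term of the series for `g⁺_τ`, without the factor `sgn(x) / (i η³(τ))`. -/
noncomputable def gplusTerm (τ : ℂ) (m : ℤ) (x : ℝ) : ℂ :=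
  e (-(x : ℂ) ^ 2 * τ / 2) * (((max ((m : ℝ) + 1 / 2 - |x|) 0 : ℝ) : ℂ) * thetaCoeff τ m)

variable {τ : ℂ}

lemma tsum_gplusTerm (τ : ℂ) (x : ℝ) :
    ∑' m, gplusTerm τ m x = e (-(x : ℂ) ^ 2 * τ / 2) * thetaTail τ |x| :=
  tsum_mul_left

lemma continuous_gplusTerm (τ : ℂ) (m : ℤ) : Continuous (gplusTerm τ m) := by
  have := (differentiable_e_neg_sq_mul τ).continuous
  unfold gplusTerm
  fun_prop

lemma norm_e_neg_sq_mul (τ : ℂ) (x : ℝ) :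
    ‖e (-(x : ℂ) ^ 2 * τ / 2)‖ = Real.exp (π * τ.im * x ^ 2) := by
  have h : -(x : ℂ) ^ 2 * τ / 2 = ((-x ^ 2 / 2 : ℝ) : ℂ) * τ := by
    push_cast
    ring
  rw [h, norm_e, im_ofReal_mul]
  ring_nf

lemma norm_gplusTerm (τ : ℂ) (m : ℤ) (x : ℝ) : ‖gplusTerm τ m x‖ =
    max ((m : ℝ) + 1 / 2 - |x|) 0 *
      Real.exp (-(π * τ.im * ((m + 1 / 2 - |x|) * (m + 1 / 2 + |x|)))) := by
  rw [gplusTerm, norm_mul, norm_mul, norm_e_neg_sq_mul, norm_thetaCoeff, norm_real,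
    Real.norm_of_nonneg (le_max_right _ _), mul_left_comm, ← Real.exp_add, ← sq_abs x]
  ring_nf

lemma norm_gplusTerm_le_exp_neg_sq (hτ : 0 < τ.im) (m : ℤ) (x : ℝ) :
    ‖gplusTerm τ (m + ⌈|x| - 1 / 2⌉) x‖ ≤ (|(m : ℝ)| + 1) * Real.exp (-(π * τ.im * m ^ 2)) := by
  have hN := Int.le_ceil (|x| - 1 / 2)
  have hN' := Int.ceil_lt_add_one (|x| - 1 / 2)
  have hx := abs_nonneg x
  rw [norm_gplusTerm]
  push_cast
  rcases lt_or_ge m 0 with hm | hm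
  · have : (m : ℝ) + 1 ≤ 0 := mod_cast hm
    rw [max_eq_right (by linarith), zero_mul]
    positivity
  · have hm' : (0 : ℝ) ≤ m := mod_cast hm
    rw [abs_of_nonneg hm', sq]
    gcongr
    · exact max_le (by linarith) (by linarith)
    all_goals linarith

lemma exists_norm_tsum_gplusTerm_le (hτ : 0 < τ.im) : ∃ C, ∀ x, ‖∑' m, gplusTerm τ m x‖ ≤ C := by
  refine ⟨∑' m : ℤ, (|(m : ℝ)| + 1) * Real.exp (-(π * τ.im * m ^ 2)), fun x ↦ ?_⟩
  rw [← (Equiv.addRight ⌈|x| - 1 / 2⌉).tsum_eq]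
  exact tsum_of_norm_bounded
    (summable_abs_add_one_mul_exp_neg_sq (mul_pos Real.pi_pos hτ)).hasSum
    (norm_gplusTerm_le_exp_neg_sq hτ · x)

lemma norm_gplusTerm_le_gammaRamp (hτ : 0 < τ.im) (m : ℤ) (x : ℝ) : ‖gplusTerm τ m x‖ ≤
    gammaRamp (π * τ.im * |(m : ℝ) + 1 / 2|) (m + 1 / 2 - x) +
      gammaRamp (π * τ.im * |(m : ℝ) + 1 / 2|) (m + 1 / 2 + x) := by
  set M : ℝ := m + 1 / 2
  set a := π * τ.im * |M| with ha
  have habs : ‖gplusTerm τ m x‖ ≤ gammaRamp a (M - |x|) := by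
    rw [norm_gplusTerm, gammaRamp]
    change max (M - |x|) 0 * Real.exp (-(π * τ.im * ((M - |x|) * (M + |x|)))) ≤
      max (M - |x|) 0 * Real.exp (-(a * (M - |x|)))
    rcases le_or_gt M |x| with hM | hM
    · rw [max_eq_right (sub_nonpos.mpr hM), zero_mul, zero_mul]
    · rw [ha, abs_of_pos ((abs_nonneg x).trans_lt hM), mul_assoc _ M,
        mul_comm (M - |x|) (M + |x|)]
      gcongr
      exact le_add_of_nonneg_right (abs_nonneg x)
  refine habs.trans ?_
  rcases abs_choice x with hx | hx <;> rw [hx]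
  · exact le_add_of_nonneg_right (gammaRamp_nonneg _ _)
  · rw [sub_neg_eq_add]
    exact le_add_of_nonneg_left (gammaRamp_nonneg _ _)

lemma mul_abs_intCast_add_half_pos (hτ : 0 < τ.im) (m : ℤ) : 0 < π * τ.im * |(m : ℝ) + 1 / 2| := by
  have : (m : ℝ) + 1 / 2 ≠ 0 := fun h ↦ by
    have : 2 * m + 1 = 0 := by exact_mod_cast (by linarith : 2 * (m : ℝ) + 1 = 0)
    lia
  positivity

lemma integrable_gplusTerm (hτ : 0 < τ.im) (m : ℤ) : Integrable (gplusTerm τ m) := by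
  have hramp := integrable_gammaRamp (mul_abs_intCast_add_half_pos hτ m)
  exact ((hramp.comp_sub_left _).add (hramp.comp_add_left _)).mono'
    (continuous_gplusTerm τ m).aestronglyMeasurable
    (ae_of_all _ (norm_gplusTerm_le_gammaRamp hτ m))

lemma integral_norm_gplusTerm_le (hτ : 0 < τ.im) (m : ℤ) :
    ∫ x, ‖gplusTerm τ m x‖ ≤ 2 * (1 / (π * τ.im * |(m : ℝ) + 1 / 2|)) ^ 2 := by
  have ha := mul_abs_intCast_add_half_pos hτ m
  have hramp := integrable_gammaRamp ha
  have hsub := hramp.comp_sub_left ((m : ℝ) + 1 / 2)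
  have hadd := hramp.comp_add_left ((m : ℝ) + 1 / 2)
  refine (integral_mono (integrable_gplusTerm hτ m).norm (hsub.add hadd)
    (norm_gplusTerm_le_gammaRamp hτ m)).trans_eq ?_
  simp_rw [Pi.add_apply]
  rw [integral_add hsub hadd, integral_sub_left_eq_self, integral_add_left_eq_self,
    integral_gammaRamp ha, two_mul]

lemma hasFiniteIntegral_tsum_gplusTerm (hτ : 0 < τ.im) :
    HasFiniteIntegral fun x ↦ ∑' m, gplusTerm τ m x := by
  refine hasFiniteIntegral_tsum_of_summable_integral_norm (integrable_gplusTerm hτ)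
    (.of_nonneg_of_le (fun m ↦ integral_nonneg fun x ↦ norm_nonneg _)
      (integral_norm_gplusTerm_le hτ) ?_)
  refine (((Real.summable_one_div_int_add_rpow (1 / 2) 2).mpr one_lt_two).mul_left
    (2 / (π * τ.im) ^ 2)).congr fun m ↦ ?_
  rw [Real.rpow_two]
  ring

lemma integrable_tsum_gplusTerm (hτ : 0 < τ.im) :
    Integrable fun x ↦ ∑' m, gplusTerm τ m x := by
  refine ⟨?_, hasFiniteIntegral_tsum_gplusTerm hτ⟩
  obtain ⟨L, hL⟩ := lipschitzWith_thetaTail hτ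
  rw [funext (tsum_gplusTerm τ)]
  exact ((differentiable_e_neg_sq_mul τ).continuous.mul
    (hL.continuous.comp continuous_abs)).aestronglyMeasurable

lemma norm_sign_le_one (x : ℝ) : ‖(Real.sign x : ℂ)‖ ≤ 1 := by
  rcases Real.sign_apply_eq x with h | h | h <;> simp [h]

lemma norm_gplus_le (τ : ℂ) (x : ℝ) :
    ‖gplus τ x‖ ≤ ‖eta3 τ‖⁻¹ * ‖∑' m, gplusTerm τ m x‖ := by
  rw [gplus_eq_thetaTail, mul_right_comm, ← tsum_gplusTerm, norm_mul, norm_div, norm_mul, norm_I,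
    one_mul, mul_comm, ← one_div]
  gcongr
  exact norm_sign_le_one x

lemma norm_gstar_le (hτ : 0 < τ.im) (x : ℝ) : ‖gstar τ x‖ ≤ Real.exp (-(π * τ.im) * x ^ 2) := by
  have herfc := erfc_le_exp_neg_sq (y := √(2 * π * τ.im) * |x|) (by positivity)
  rw [mul_pow, Real.sq_sqrt (by positivity), sq_abs] at herfc
  have hsign : ‖(Real.sign x : ℂ) / 2‖ ≤ 1 := by
    rw [norm_div, Complex.norm_ofNat]
    linarith [norm_sign_le_one x]
  calc ‖gstar τ x‖
    _ ≤ Real.exp (π * τ.im * x ^ 2) * 1 * Real.exp (-(2 * π * τ.im * x ^ 2)) := by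
      rw [gstar, norm_mul, norm_mul, norm_e_neg_sq_mul, norm_real,
        Real.norm_of_nonneg (erfc_nonneg _)]
      gcongr
      exact erfc_nonneg _
    _ = Real.exp (-(π * τ.im) * x ^ 2) := by
      rw [mul_one, ← Real.exp_add]
      ring_nf

lemma norm_gfun_le (hτ : 0 < τ.im) (x : ℝ) : ‖gfun τ x‖ ≤
    ‖eta3 τ‖⁻¹ * ‖∑' m, gplusTerm τ m x‖ + Real.exp (-(π * τ.im) * x ^ 2) :=
  (norm_sub_le _ _).trans (add_le_add (norm_gplus_le τ x) (norm_gstar_le hτ x))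

lemma exists_norm_gfun_le (hτ : 0 < τ.im) : ∃ C, ∀ x, ‖gfun τ x‖ ≤ C := by
  obtain ⟨C, hC⟩ := exists_norm_tsum_gplusTerm_le hτ
  refine ⟨‖eta3 τ‖⁻¹ * C + 1, fun x ↦ (norm_gfun_le hτ x).trans ?_⟩
  gcongr
  · exact hC x
  · rw [Real.exp_le_one_iff, neg_mul, neg_nonpos]
    positivity

lemma integrable_gfun (hτ : 0 < τ.im) : Integrable (gfun τ) :=
  (((integrable_tsum_gplusTerm hτ).norm.const_mul _).add
    (integrable_exp_neg_mul_sq (mul_pos Real.pi_pos hτ))).mono'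
    (continuous_gfun hτ).aestronglyMeasurable (ae_of_all _ (norm_gfun_le hτ))

end Bounds

/-- basic properties of `g_τ`. -/
theorem gfun_basic_properties (τ : ℂ) (hτ : 0 < τ.im) :
    (∀ x : ℝ, gfun τ (-x) = -gfun τ x) ∧
    Continuous (gfun τ) ∧
    (∀ x : ℝ, (∀ m : ℤ, x ≠ (m : ℝ) + 1/2) → DifferentiableAt ℝ (gfun τ) x) ∧
    (∃ C : ℝ, ∀ x : ℝ, ‖gfun τ x‖ ≤ C) ∧
    MeasureTheory.Integrable (gfun τ) :=
  ⟨gfun_neg τ, continuous_gfun hτ, fun _ ↦ differentiableAt_gfun hτ, exists_norm_gfun_le hτ,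
    integrable_gfun hτ⟩
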